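/- arXiv:1411.6298 — 6 statements merged into one kernel-verified Lean document; each statement's English description precedes it below -/
import Mathlib

section
/- Let d ≥ 1, t ≥ 0, n ∈ ℤ/dℤ, φ ∈ ℝ, and let v ∈ ℂ⁴ be a unit coin vector, with initial state ψ₀ = |0⟩⊗v. Set φ' = −(2+φ) and let Q be the 4×4 diagonal matrix diag(1,1,1,−1) acting on the coin registers (ordered coin basis |↓↓⟩,|↓↑⟩,|↑↓⟩,|↑↑⟩). Then p(n,t,φ; |0⟩⊗v) = p(n,t,φ'; |0⟩⊗Qv). -/
open scoped Classical
open Complex Matrix Finset Filter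

noncomputable section

/-- The 2×2 coin matrix `C(θ)`. -/
def Cmat (θ : ℝ) : Matrix (Fin 2) (Fin 2) ℂ :=
  !![(Real.cos θ : ℂ), (Real.sin θ : ℂ); (Real.sin θ : ℂ), -(Real.cos θ : ℂ)]

/-- Encode a pair of coin states into `Fin 4` (ordered basis `|↓↓⟩,|↓↑⟩,|↑↓⟩,|↑↑⟩`). -/
def enc (c₁ c₂ : Fin 2) : Fin 4 := ⟨2 * c₁.val + c₂.val, by omega⟩

/-- First coin register of a combined index. -/
def dec₁ (i : Fin 4) : Fin 2 := ⟨i.val / 2, by omega⟩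

/-- Second (active) coin register of a combined index. -/
def dec₂ (i : Fin 4) : Fin 2 := ⟨i.val % 2, by omega⟩

/-- Coin flip operator `Ĉ(φ) = |↓⟩⟨↓|⊗C(π/4) + |↑⟩⟨↑|⊗C((π/4)(1+φ))` as a 4×4 matrix. -/
def Chat (φ : ℝ) : Matrix (Fin 4) (Fin 4) ℂ :=
  Matrix.of fun i j =>
    if dec₁ i = dec₁ j then
      (if dec₁ i = 0 then Cmat (Real.pi / 4) else Cmat (Real.pi / 4 * (1 + φ)))
        (dec₂ i) (dec₂ j)
    else 0

/-- A state of a walk on the `d`-cycle with two coin/memory registers: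
position `ZMod d`, combined coin index `Fin 4`. -/
abbrev WState (d : ℕ) := ZMod d → Fin 4 → ℂ

/-- Application of the coin flip operator `I_P ⊗ Ĉ(φ)`. -/
def coinOp (d : ℕ) (φ : ℝ) (ψ : WState d) : WState d :=
  fun n => (Chat φ).mulVec (ψ n)

/-- The shift operator: `|n,c₁,↓⟩ ↦ |n-1,c₁,↓⟩`, `|n,c₁,↑⟩ ↦ |n+1,c₁,↑⟩`. -/
def shiftOp (d : ℕ) (ψ : WState d) : WState d :=
  fun n i => if dec₂ i = 0 then ψ (n + 1) i else ψ (n - 1) i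

/-- The memory update operator `I_P ⊗ M` swapping the two coin registers. -/
def memOp (d : ℕ) (ψ : WState d) : WState d :=
  fun n i => ψ n (enc (dec₂ i) (dec₁ i))

/-- One step `U(φ) = (I_P⊗M)·S·(I_P⊗Ĉ(φ))` of the recycled-coin walk. -/
def Urc (d : ℕ) (φ : ℝ) (ψ : WState d) : WState d :=
  memOp d (shiftOp d (coinOp d φ ψ))

/-- The localized initial state `|0⟩ ⊗ v`. -/
def initState (d : ℕ) (v : Fin 4 → ℂ) : WState d :=
  fun n i => if n = 0 then v i else 0

/-- Position probability `p(n,t,φ;ψ₀)` of the recycled-coin walk. -/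
def prob (d : ℕ) (φ : ℝ) (ψ₀ : WState d) (n : ZMod d) (t : ℕ) : ℝ :=
  ∑ i : Fin 4, ‖((Urc d φ)^[t] ψ₀) n i‖ ^ 2

/-- `Q = diag(1,1,1,-1)`. -/
def Qmat : Matrix (Fin 4) (Fin 4) ℂ := Matrix.diagonal ![1, 1, 1, -1]

/-- Fourier-space one-step matrix `M_k(θ)` of the recycled-coin walk. -/
def Mk (d : ℕ) (k : ZMod d) (θ : ℝ) : Matrix (Fin 4) (Fin 4) ℂ :=
  let ω : ℂ := Complex.exp (2 * Real.pi * Complex.I * k.val / d)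
  let ωb : ℂ := Complex.exp (-(2 * Real.pi * Complex.I * k.val / d))
  !![ω / Real.sqrt 2, ω / Real.sqrt 2, 0, 0;
     0, 0, ω * Real.cos θ, ω * Real.sin θ;
     ωb / Real.sqrt 2, -(ωb / Real.sqrt 2), 0, 0;
     0, 0, ωb * Real.sin θ, -(ωb * Real.cos θ)]

/-- Fourier-space one-step matrix `N_k` of the memory walk with Hadamard coin. -/
def Nk (d : ℕ) (k : ZMod d) : Matrix (Fin 4) (Fin 4) ℂ :=
  let ω : ℂ := Complex.exp (2 * Real.pi * Complex.I * k.val / d)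
  let ωb : ℂ := Complex.exp (-(2 * Real.pi * Complex.I * k.val / d))
  ((Real.sqrt 2 : ℂ))⁻¹ • !![ω, 0, ω, 0; 0, ωb, 0, ωb; 0, ω, 0, -ω; ωb, 0, -ωb, 0]

/-- The permutation matrix `P` sending `(α,β,γ,δ)ᵀ` to `(α,γ,δ,β)ᵀ`. -/
def Pmat : Matrix (Fin 4) (Fin 4) ℂ :=
  !![1, 0, 0, 0; 0, 0, 1, 0; 0, 0, 0, 1; 0, 1, 0, 0]

/-- Hermitian inner product on `ℂ⁴`, conjugate linear in the first slot. -/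
def cdot (u v : Fin 4 → ℂ) : ℂ := ∑ i : Fin 4, (starRingEnd ℂ) (u i) * v i

/-- Coin flip operator `I_M ⊗ C(π/4)` of the memory walk. -/
def coinMem (d : ℕ) (ψ : WState d) : WState d :=
  fun n => (Matrix.of fun i j =>
    if dec₁ i = dec₁ j then Cmat (Real.pi / 4) (dec₂ i) (dec₂ j) else 0 :
    Matrix (Fin 4) (Fin 4) ℂ).mulVec (ψ n)

/-- The shift operator `S_𝓜` of the memory walk (registers: memory, coin). -/
def shiftMem (d : ℕ) (ψ : WState d) : WState d :=
  fun n i =>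
    if i = (0 : Fin 4) then ψ (n + 1) 0
    else if i = (1 : Fin 4) then ψ (n + 1) 3
    else if i = (2 : Fin 4) then ψ (n - 1) 2
    else ψ (n - 1) 1

/-- One step `U_𝓜 = S_𝓜 · (I_P⊗I_M⊗C(π/4))` of the quantum walk with memory. -/
def Umem (d : ℕ) (ψ : WState d) : WState d :=
  shiftMem d (coinMem d ψ)

/-- Position probability `p_𝓜(n,t;ψ₀)` of the quantum walk with memory. -/
def probMem (d : ℕ) (ψ₀ : WState d) (n : ZMod d) (t : ℕ) : ℝ :=
  ∑ i : Fin 4, ‖((Umem d)^[t] ψ₀) n i‖ ^ 2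

/-- Matrices `M₊(θ)` (statement 9). -/
def Mplus (θ : ℝ) : Matrix (Fin 4) (Fin 4) ℂ :=
  !![1 / Real.sqrt 2, 1 / Real.sqrt 2, 0, 0;
     0, 0, Real.cos θ, Real.sin θ;
     0, 0, 0, 0;
     0, 0, 0, 0]

/-- Matrices `M₋(θ)` (statement 9). -/
def Mminus (θ : ℝ) : Matrix (Fin 4) (Fin 4) ℂ :=
  !![0, 0, 0, 0;
     0, 0, 0, 0;
     1 / Real.sqrt 2, -(1 / Real.sqrt 2 : ℂ), 0, 0;
     0, 0, Real.sin θ, -(Real.cos θ : ℂ)]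

/-- Fourier transform of an amplitude function. -/
def FT (d : ℕ) [NeZero d] (ψ : WState d) (k : ZMod d) : Fin 4 → ℂ :=
  ∑ n : ZMod d, Complex.exp (-(2 * Real.pi * Complex.I * k.val * n.val / d)) • ψ n

/-!
The sign flip `Q` is diagonal in the coin basis, so it commutes with the shift, and its entry at
`|c₁c₂⟩` is `(-1)^(c₁c₂)`, which is symmetric in `c₁` and `c₂`, so it commutes with the memory swap.
On the block `c₁ = ↑` it is the reflection `diag(1,-1)`, which carries `C(θ)` to `C(-θ)`; since
`θ(-(2+φ)) = -θ(φ)`, it intertwines the two coin flips. Hence `Q` intertwines `U(φ)` and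
`U(-(2+φ))`, and having unimodular entries it leaves all position probabilities unchanged.
-/

/-- The operator `I_P ⊗ A` that applies a coin matrix `A` at every position. -/
def onCoin (d : ℕ) (A : Matrix (Fin 4) (Fin 4) ℂ) (ψ : WState d) : WState d :=
  fun n => A *ᵥ ψ n

theorem onCoin_diagonal_apply {d : ℕ} (w : Fin 4 → ℂ) (ψ : WState d) (n : ZMod d) (i : Fin 4) :
    onCoin d (diagonal w) ψ n i = w i * ψ n i :=
  mulVec_diagonal w (ψ n) i

theorem onCoin_initState (d : ℕ) (A : Matrix (Fin 4) (Fin 4) ℂ) (v : Fin 4 → ℂ) :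
    onCoin d A (initState d v) = initState d (A *ᵥ v) := by
  funext n i
  by_cases hn : n = 0 <;> simp [onCoin, initState, hn, mulVec, dotProduct]

theorem onCoin_semiconj_coinOp (d : ℕ) {A : Matrix (Fin 4) (Fin 4) ℂ} {φ φ' : ℝ}
    (hA : SemiconjBy A (Chat φ) (Chat φ')) :
    Function.Semiconj (onCoin d A) (coinOp d φ) (coinOp d φ') := fun ψ => by
  funext n
  simp only [onCoin, coinOp, mulVec_mulVec, hA.eq]

theorem onCoin_diagonal_commute_shiftOp (d : ℕ) (w : Fin 4 → ℂ) :
    Function.Commute (onCoin d (diagonal w)) (shiftOp d) := fun ψ => by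
  funext n i
  simp only [onCoin_diagonal_apply, shiftOp, mul_ite]

theorem onCoin_diagonal_commute_memOp (d : ℕ) {w : Fin 4 → ℂ}
    (hw : ∀ i, w (enc (dec₂ i) (dec₁ i)) = w i) :
    Function.Commute (onCoin d (diagonal w)) (memOp d) := fun ψ => by
  funext n i
  simp only [onCoin_diagonal_apply, memOp, hw]

theorem onCoin_diagonal_semiconj_Urc (d : ℕ) {w : Fin 4 → ℂ} {φ φ' : ℝ}
    (hw : ∀ i, w (enc (dec₂ i) (dec₁ i)) = w i)
    (hcoin : SemiconjBy (diagonal w) (Chat φ) (Chat φ')) :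
    Function.Semiconj (onCoin d (diagonal w)) (Urc d φ) (Urc d φ') :=
  (onCoin_diagonal_commute_memOp d hw).semiconj.comp_right
    ((onCoin_diagonal_commute_shiftOp d w).semiconj.comp_right (onCoin_semiconj_coinOp d hcoin))

theorem prob_onCoin_diagonal {d : ℕ} {w : Fin 4 → ℂ} {φ φ' : ℝ}
    (hw : ∀ i, w (enc (dec₂ i) (dec₁ i)) = w i) (hnorm : ∀ i, ‖w i‖ = 1)
    (hcoin : SemiconjBy (diagonal w) (Chat φ) (Chat φ'))
    (ψ : WState d) (n : ZMod d) (t : ℕ) :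
    prob d φ' (onCoin d (diagonal w) ψ) n t = prob d φ ψ n t := by
  have evolution : (Urc d φ')^[t] (onCoin d (diagonal w) ψ)
      = onCoin d (diagonal w) ((Urc d φ)^[t] ψ) :=
    ((onCoin_diagonal_semiconj_Urc d hw hcoin).iterate_right t ψ).symm
  simp only [prob, evolution, onCoin_diagonal_apply, norm_mul, hnorm, one_mul]

theorem semiconjBy_reflection_Cmat (θ : ℝ) :
    SemiconjBy (diagonal ![1, -1]) (Cmat θ) (Cmat (-θ)) := by
  ext a b
  fin_cases a <;> fin_cases b <;> simp [Cmat]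

theorem Qmat_eq_diagonal_ite :
    Qmat = diagonal fun i => if dec₁ i = 0 then 1 else ![1, -1] (dec₂ i) := by
  refine congr_arg diagonal (funext fun i => ?_)
  fin_cases i <;> simp [dec₁, dec₂]

theorem semiconjBy_Qmat_Chat (φ : ℝ) :
    SemiconjBy Qmat (Chat φ) (Chat (-(2 + φ))) := by
  have angle : Real.pi / 4 * (1 + -(2 + φ)) = -(Real.pi / 4 * (1 + φ)) := by ring
  ext i j
  rw [Qmat_eq_diagonal_ite, diagonal_mul, mul_diagonal]
  simp only [Chat, of_apply, angle]
  by_cases same_block : dec₁ i = dec₁ j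
  · by_cases down : dec₁ j = 0
    · simp only [same_block, down, if_true, one_mul, mul_one]
    · have reflection := congr_fun₂ (semiconjBy_reflection_Cmat (Real.pi / 4 * (1 + φ))).eq
        (dec₂ i) (dec₂ j)
      rw [diagonal_mul, mul_diagonal] at reflection
      simpa only [same_block, down, if_true, if_false] using reflection
  · simp only [same_block, if_false, mul_zero, zero_mul]

theorem statement0_general (d : ℕ) (t : ℕ) (n : ZMod d) (φ : ℝ) (ψ : WState d) :
    prob d φ ψ n t = prob d (-(2 + φ)) (onCoin d Qmat ψ) n t := by
  refine (prob_onCoin_diagonal (fun i => ?_) (fun i => ?_) (semiconjBy_Qmat_Chat φ) ψ n t).symm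
  · fin_cases i <;> rfl
  · fin_cases i <;> simp

/-- `p(n,t,φ; |0⟩⊗v) = p(n,t,-(2+φ); |0⟩⊗Qv)` (Theorem 1 of the paper). -/
theorem statement0 (d : ℕ) (hd : 1 ≤ d) (t : ℕ) (n : ZMod d) (φ : ℝ)
    (v : Fin 4 → ℂ) (hv : ∑ i : Fin 4, ‖v i‖ ^ 2 = 1) :
    prob d φ (initState d v) n t
      = prob d (-(2 + φ)) (initState d (Qmat.mulVec v)) n t := by
  rw [← onCoin_initState]
  exact statement0_general d t n φ (initState d v)

end
end

section
/- Let d ≥ 1, n ∈ ℤ/dℤ, φ ∈ ℝ, and let v ∈ ℂ⁴ be a unit coin vector. Set φ' = −(2+φ) and let Q = diag(1,1,1,−1) on the coin registers. Then for every integer T ≥ 1, the Cesàro averages agree: (1/T)·Σ_{t=1}^{T} p(n,t,φ; |0⟩⊗v) = (1/T)·Σ_{t=1}^{T} p(n,t,φ'; |0⟩⊗Qv). In particular, whenever the time-averaged (limiting) distributions p̄(n,φ;ψ₀) = lim_{T→∞}(1/T)Σ_{t=1}^{T} p(n,t,φ;ψ₀) exist, they coincide: p̄(n,φ; |0⟩⊗v)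 = p̄(n,φ'; |0⟩⊗Qv). -/
open scoped Classical
open Complex Matrix Finset Filter

noncomputable section

/-!
Since `θ(φ') = -θ(φ)` and conjugation by `diag(1, -1)` turns `C(θ)` into `C(-θ)`, the operator `Q`,
which is `1` on the block `c₁ = ↓` and `diag(1, -1)` on the block `c₁ = ↑`, intertwines `Ĉ(φ)` and
`Ĉ(φ')`. It is diagonal, so it commutes with the shift, and its diagonal is symmetric under
exchange of the two coins, so it commutes with the memory update. Hence `Q` intertwines `U(φ)` and
`U(φ')`, and as its entries have modulus one it preserves the position probabilities at every time.
-/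

section CoinAct

variable {d : ℕ}

/-- The operator `I_P ⊗ A`, applying the coin matrix `A` at every position. -/
def coinAct (A : Matrix (Fin 4) (Fin 4) ℂ) (ψ : WState d) : WState d :=
  fun n => A *ᵥ ψ n

theorem coinAct_diagonal_apply (w : Fin 4 → ℂ) (ψ : WState d) (n : ZMod d) (i : Fin 4) :
    coinAct (diagonal w) ψ n i = w i * ψ n i :=
  mulVec_diagonal w (ψ n) i

theorem coinAct_coinAct (A B : Matrix (Fin 4) (Fin 4) ℂ) (ψ : WState d) :
    coinAct A (coinAct B ψ) = coinAct (A * B) ψ :=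
  funext fun n => mulVec_mulVec (ψ n) A B

theorem coinOp_eq_coinAct (φ : ℝ) : coinOp d φ = coinAct (Chat φ) := rfl

theorem initState_eq_single (v : Fin 4 → ℂ) : initState d v = Pi.single 0 v := by
  funext n i
  by_cases hn : n = 0 <;> simp [initState, hn]

theorem coinAct_initState (A : Matrix (Fin 4) (Fin 4) ℂ) (v : Fin 4 → ℂ) :
    coinAct A (initState d v) = initState d (A *ᵥ v) := by
  simp only [initState_eq_single]
  exact funext (Pi.apply_single (fun _ => (A *ᵥ ·)) (fun _ => mulVec_zero A) 0 v)

theorem shiftOp_coinAct_diagonal (w : Fin 4 → ℂ) (ψ : WState d) :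
    shiftOp d (coinAct (diagonal w) ψ) = coinAct (diagonal w) (shiftOp d ψ) := by
  funext n i
  simp only [shiftOp, coinAct_diagonal_apply, mul_ite]

theorem memOp_coinAct_diagonal {w : Fin 4 → ℂ} (hw : ∀ i, w (enc (dec₂ i) (dec₁ i)) = w i)
    (ψ : WState d) :
    memOp d (coinAct (diagonal w) ψ) = coinAct (diagonal w) (memOp d ψ) := by
  funext n i
  simp only [memOp, coinAct_diagonal_apply, hw]

theorem sum_norm_sq_coinAct_diagonal {w : Fin 4 → ℂ} (hw : ∀ i, ‖w i‖ = 1) (ψ : WState d)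
    (n : ZMod d) :
    ∑ i, ‖coinAct (diagonal w) ψ n i‖ ^ 2 = ∑ i, ‖ψ n i‖ ^ 2 := by
  simp only [coinAct_diagonal_apply, norm_mul, hw, one_mul]

theorem Urc_coinAct_diagonal {w : Fin 4 → ℂ} (hw : ∀ i, w (enc (dec₂ i) (dec₁ i)) = w i)
    {φ φ' : ℝ} (hC : Chat φ' * diagonal w = diagonal w * Chat φ) (ψ : WState d) :
    Urc d φ' (coinAct (diagonal w) ψ) = coinAct (diagonal w) (Urc d φ ψ) := by
  simp only [Urc, coinOp_eq_coinAct]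
  rw [coinAct_coinAct, hC, ← coinAct_coinAct, shiftOp_coinAct_diagonal, memOp_coinAct_diagonal hw]

theorem prob_coinAct_diagonal {w : Fin 4 → ℂ} (hw : ∀ i, w (enc (dec₂ i) (dec₁ i)) = w i)
    (hw_norm : ∀ i, ‖w i‖ = 1) {φ φ' : ℝ} (hC : Chat φ' * diagonal w = diagonal w * Chat φ)
    (ψ : WState d) (n : ZMod d) (t : ℕ) :
    prob d φ' (coinAct (diagonal w) ψ) n t = prob d φ ψ n t := by
  have hU : Function.Semiconj (coinAct (diagonal w)) (Urc d φ) (Urc d φ') :=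
    fun χ => (Urc_coinAct_diagonal hw hC χ).symm
  rw [prob, ← (hU.iterate_right t).eq, sum_norm_sq_coinAct_diagonal hw_norm, prob]

end CoinAct

theorem Cmat_neg_mul_diagonal (θ : ℝ) :
    Cmat (-θ) * diagonal ![1, -1] = diagonal ![1, -1] * Cmat θ := by
  ext i j
  fin_cases i <;> fin_cases j <;> simp [Cmat]

/-- The diagonal of `Q = diag(1,1,1,-1)`. -/
def qDiag : Fin 4 → ℂ := ![1, 1, 1, -1]

theorem Qmat_eq_diagonal : Qmat = diagonal qDiag := rfl

theorem qDiag_eq_ite (i : Fin 4) :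
    qDiag i = if dec₁ i = 0 then 1 else (![1, -1] : Fin 2 → ℂ) (dec₂ i) := by
  fin_cases i <;> simp [qDiag, dec₁, dec₂]

theorem qDiag_swap (i : Fin 4) : qDiag (enc (dec₂ i) (dec₁ i)) = qDiag i := by
  fin_cases i <;> rfl

theorem norm_qDiag (i : Fin 4) : ‖qDiag i‖ = 1 := by
  fin_cases i <;> simp [qDiag]

theorem Chat_neg_two_add_mul_Qmat (φ : ℝ) : Chat (-(2 + φ)) * Qmat = Qmat * Chat φ := by
  have hangle : Real.pi / 4 * (1 + -(2 + φ)) = -(Real.pi / 4 * (1 + φ)) := by ring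
  have hflip (a b : Fin 2) := congr_fun₂ (Cmat_neg_mul_diagonal (Real.pi / 4 * (1 + φ))) a b
  simp only [mul_diagonal, diagonal_mul] at hflip
  ext i j
  rw [Qmat_eq_diagonal, mul_diagonal, diagonal_mul, qDiag_eq_ite, qDiag_eq_ite]
  simp only [Chat, of_apply, hangle]
  by_cases hblock : dec₁ i = dec₁ j
  · by_cases hdown : dec₁ j = 0
    · simp [hblock, hdown]
    · simpa only [hblock, hdown, if_true, if_false] using hflip (dec₂ i) (dec₂ j)
  · simp [hblock]

theorem statement1_general {d : ℕ} (φ : ℝ) (ψ : WState d) (n : ZMod d) (t : ℕ) :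
    prob d (-(2 + φ)) (coinAct Qmat ψ) n t = prob d φ ψ n t :=
  prob_coinAct_diagonal qDiag_swap norm_qDiag (Chat_neg_two_add_mul_Qmat φ) ψ n t

/-- the Cesàro averages for parameters `φ` (state `v`) and `φ' = -(2+φ)`
(state `Qv`) agree for all `T ≥ 1`; in particular the limiting distributions coincide
whenever they exist. -/
theorem statement1 (d : ℕ) (hd : 1 ≤ d) (n : ZMod d) (φ : ℝ)
    (v : Fin 4 → ℂ) (hv : ∑ i : Fin 4, ‖v i‖ ^ 2 = 1) :
    (∀ T : ℕ, 1 ≤ T →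
      (1 / (T : ℝ)) * ∑ t ∈ Finset.Icc 1 T, prob d φ (initState d v) n t
        = (1 / (T : ℝ)) * ∑ t ∈ Finset.Icc 1 T,
            prob d (-(2 + φ)) (initState d (Qmat.mulVec v)) n t) ∧
    (∀ L : ℝ,
      Tendsto (fun T : ℕ =>
          (1 / (T : ℝ)) * ∑ t ∈ Finset.Icc 1 T, prob d φ (initState d v) n t)
        atTop (nhds L) →
      Tendsto (fun T : ℕ =>
          (1 / (T : ℝ)) * ∑ t ∈ Finset.Icc 1 T,
            prob d (-(2 + φ)) (initState d (Qmat.mulVec v)) n t)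
        atTop (nhds L)) := by
  simp only [← coinAct_initState, statement1_general, imp_self, implies_true, and_self]

end
end

section
/- Let d ≥ 1, k ∈ ℤ/dℤ, and let P be the 4×4 permutation matrix sending (α,β,γ,δ)ᵀ to (α,γ,δ,β)ᵀ. If λ ∈ ℂ is an eigenvalue of N_k with eigenvector v ∈ ℂ⁴ (i.e., N_k v = λv, v ≠ 0), then M_k(3π/4)(Pv) = λ(Pv); that is, λ is also an eigenvalue of M_k(3π/4) with eigenvector Pv. -/
open scoped Classical
open Complex Matrix Finset Filter

noncomputable section

/-!
The permutation `P` intertwines the two one-step matrices, `M_k(3π/4) P = P N_k`, because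
`cos (3π/4) = -1/√2` and `sin (3π/4) = 1/√2`; an intertwiner carries eigenvectors to eigenvectors
for the same eigenvalue.
-/

section Intertwining

variable {R m n : Type*} [CommSemiring R] [Fintype m] [Fintype n]

theorem mulVec_mulVec_eq_smul_of_mul_eq_mul {A : Matrix n n R} {B : Matrix m m R}
    {P : Matrix m n R} (hP : B * P = P * A) {μ : R} {v : n → R} (hv : A *ᵥ v = μ • v) :
    B *ᵥ (P *ᵥ v) = μ • (P *ᵥ v) :=
  calc B *ᵥ (P *ᵥ v) = P *ᵥ (A *ᵥ v) := by rw [mulVec_mulVec, hP, ← mulVec_mulVec]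
    _ = μ • (P *ᵥ v) := by rw [hv, mulVec_smul]

end Intertwining

theorem cos_three_mul_pi_div_four : Real.cos (3 * Real.pi / 4) = -(√2)⁻¹ := by
  rw [show 3 * Real.pi / 4 = Real.pi - Real.pi / 4 by ring, Real.cos_pi_sub,
    Real.cos_pi_div_four, Real.sqrt_div_self]

theorem sin_three_mul_pi_div_four : Real.sin (3 * Real.pi / 4) = (√2)⁻¹ := by
  rw [show 3 * Real.pi / 4 = Real.pi - Real.pi / 4 by ring, Real.sin_pi_sub,
    Real.sin_pi_div_four, Real.sqrt_div_self]

theorem Mk_three_mul_pi_div_four_mul_Pmat (d : ℕ) (k : ZMod d) :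
    Mk d k (3 * Real.pi / 4) * Pmat = Pmat * Nk d k := by
  simp only [Mk, Nk, Pmat, cos_three_mul_pi_div_four, sin_three_mul_pi_div_four]
  ext i j
  fin_cases i <;> fin_cases j <;>
    simp [Matrix.mul_apply, Fin.sum_univ_four, div_eq_mul_inv, mul_comm]

/-- if `λ` is an eigenvalue of `N_k` with eigenvector `v`, then `λ` is
an eigenvalue of `M_k(3π/4)` with eigenvector `Pv`. -/
theorem statement7 (d : ℕ) (hd : 1 ≤ d) (k : ZMod d) (lam : ℂ)
    (v : Fin 4 → ℂ) (hv : v ≠ 0) (h : (Nk d k).mulVec v = lam • v) :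
    (Mk d k (3 * Real.pi / 4)).mulVec (Pmat.mulVec v) = lam • Pmat.mulVec v := by
  exact mulVec_mulVec_eq_smul_of_mul_eq_mul (Mk_three_mul_pi_div_four_mul_Pmat d k) h

end
end

section
/- Let d ≥ 1, k ∈ ℤ/dℤ, and let P be the 4×4 permutation matrix sending (α,β,γ,δ)ᵀ to (α,γ,δ,β)ᵀ. Then the intertwining identity M_k(3π/4) · P = P · N_k holds; equivalently, M_k(3π/4) = P · N_k · P*. -/
open scoped Classical
open Complex Matrix Finset Filter

noncomputable section

/-! Up to the order of the basis, the two walks take the same step: at `θ = 3π/4` all nonzero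
entries of both one-step matrices are `±ω/√2` or `±ω̄/√2`, and `M_k(3π/4)` is `N_k` with rows and
columns relabelled by one permutation `σ`. Conjugation by the permutation matrix of `σ` is exactly
this relabelling. -/

section PermMatrix

variable {n R : Type*} [Fintype n] [DecidableEq n] [NonAssocSemiring R]

theorem submatrix_mul_permMatrix (σ : Equiv.Perm n) (A : Matrix n n R) :
    A.submatrix σ σ * σ.permMatrix R = σ.permMatrix R * A := by
  rw [PEquiv.mul_toMatrix_toPEquiv, PEquiv.toMatrix_toPEquiv_mul, submatrix_submatrix,
    Equiv.self_comp_symm, Function.comp_id]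

theorem permMatrix_mul_mul_conjTranspose [StarRing R] (σ : Equiv.Perm n) (A : Matrix n n R) :
    σ.permMatrix R * A * (σ.permMatrix R)ᴴ = A.submatrix σ σ := by
  rw [conjTranspose_permMatrix, PEquiv.toMatrix_toPEquiv_mul, PEquiv.mul_toMatrix_toPEquiv,
    submatrix_submatrix, Function.comp_id, Function.id_comp, Equiv.Perm.inv_def, Equiv.symm_symm]

end PermMatrix

/-- The permutation `σ` of the coin basis underlying `Pmat`, i.e. the 3-cycle `1 ↦ 2 ↦ 3 ↦ 1`.
The convention is that of `Equiv.Perm.permMatrix`: row `i` of `Pmat` has its `1` in column `σ i`. -/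
def coinPerm : Equiv.Perm (Fin 4) where
  toFun := ![0, 2, 3, 1]
  invFun := ![0, 3, 1, 2]
  left_inv := by decide
  right_inv := by decide

theorem Pmat_eq_permMatrix : Pmat = coinPerm.permMatrix ℂ := by
  ext i j
  fin_cases i <;> fin_cases j <;> simp [Pmat, coinPerm, PEquiv.toMatrix_apply]

theorem Mk_three_mul_pi_div_four_eq_submatrix (d : ℕ) (k : ZMod d) :
    Mk d k (3 * Real.pi / 4) = (Nk d k).submatrix coinPerm coinPerm := by
  rw [Mk, Nk, cos_three_mul_pi_div_four, sin_three_mul_pi_div_four]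
  ext i j
  fin_cases i <;> fin_cases j <;> simp [coinPerm, div_eq_inv_mul, mul_comm]

/-- the intertwining identity `M_k(3π/4)·P = P·N_k`, equivalently
`M_k(3π/4) = P·N_k·P*`. -/
theorem statement8 (d : ℕ) (hd : 1 ≤ d) (k : ZMod d) :
    Mk d k (3 * Real.pi / 4) * Pmat = Pmat * Nk d k ∧
    Mk d k (3 * Real.pi / 4) = Pmat * Nk d k * Pmatᴴ := by
  rw [Mk_three_mul_pi_div_four_eq_submatrix, Pmat_eq_permMatrix]
  exact ⟨submatrix_mul_permMatrix coinPerm (Nk d k),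
    (permMatrix_mul_mul_conjTranspose coinPerm (Nk d k)).symm⟩

end
end

section
/- Let d ≥ 1, φ ∈ ℝ, θ = (π/4)(1+φ), and let ψ : ℤ/dℤ → ℂ⁴ be any amplitude function, representing the state Ψ = Σ_{n} |n⟩⊗ψ(n) of the recycled-coin walk. Then U(φ)Ψ = Σ_{n} |n⟩⊗ψ'(n) where ψ'(n) = M₊(θ)·ψ(n+1) + M₋(θ)·ψ(n−1) (indices mod d), with M₊(θ) the 4×4 matrix whose rows are (1/√2, 1/√2, 0, 0), (0, 0, cos θ, sin θ), (0,0,0,0), (0,0,0,0), and M₋(θ) the 4×4 matrix whose rows are (0,0,0,0), (0,0,0,0), (1/√2, −1/√2, 0, 0), (0, 0, sin θ, −cos θ). -/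
open scoped Classical
open Complex Matrix Finset Filter

noncomputable section

/-- The involution of the combined coin basis exchanging the two registers,
`|c₁c₂⟩ ↦ |c₂c₁⟩`. -/
def swapCoins (i : Fin 4) : Fin 4 := enc (dec₂ i) (dec₁ i)

lemma dec₂_enc (c₁ c₂ : Fin 2) : dec₂ (enc c₁ c₂) = c₂ := by
  ext
  simp only [dec₂, enc]
  omega

lemma dec₂_swapCoins (i : Fin 4) : dec₂ (swapCoins i) = dec₁ i :=
  dec₂_enc _ _

-- After the memory update the first register holds the coin that has just driven the shift,
-- so `dec₁` decides the direction from which the amplitude arrives.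
lemma Urc_apply (d : ℕ) (φ : ℝ) (ψ : WState d) (n : ZMod d) (i : Fin 4) :
    Urc d φ ψ n i =
      if dec₁ i = 0 then (Chat φ *ᵥ ψ (n + 1)) (swapCoins i)
      else (Chat φ *ᵥ ψ (n - 1)) (swapCoins i) := by
  rw [← dec₂_swapCoins i]
  rfl

lemma Cmat_pi_div_four :
    Cmat (Real.pi / 4) =
      !![1 / (Real.sqrt 2 : ℂ), 1 / (Real.sqrt 2 : ℂ);
         1 / (Real.sqrt 2 : ℂ), -(1 / (Real.sqrt 2 : ℂ))] := by
  have sqrt_two_div_two : ((Real.sqrt 2 / 2 : ℝ) : ℂ) = 1 / (Real.sqrt 2 : ℂ) := by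
    rw [Real.sqrt_div_self', ofReal_div, ofReal_one]
  rw [Cmat, Real.cos_pi_div_four, Real.sin_pi_div_four, sqrt_two_div_two]

lemma Chat_eq (φ : ℝ) :
    Chat φ =
      !![Cmat (Real.pi / 4) 0 0, Cmat (Real.pi / 4) 0 1, 0, 0;
         Cmat (Real.pi / 4) 1 0, Cmat (Real.pi / 4) 1 1, 0, 0;
         0, 0, Cmat (Real.pi / 4 * (1 + φ)) 0 0, Cmat (Real.pi / 4 * (1 + φ)) 0 1;
         0, 0, Cmat (Real.pi / 4 * (1 + φ)) 1 0, Cmat (Real.pi / 4 * (1 + φ)) 1 1] := by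
  ext i j
  fin_cases i <;> fin_cases j <;> rfl

lemma Mplus_apply (φ : ℝ) (i : Fin 4) :
    Mplus (Real.pi / 4 * (1 + φ)) i = if dec₁ i = 0 then Chat φ (swapCoins i) else 0 := by
  rw [Chat_eq, Cmat_pi_div_four]
  ext j
  fin_cases i <;> fin_cases j <;> simp [Mplus, Cmat, swapCoins, enc, dec₁, dec₂]

lemma Mminus_apply (φ : ℝ) (i : Fin 4) :
    Mminus (Real.pi / 4 * (1 + φ)) i = if dec₁ i = 0 then 0 else Chat φ (swapCoins i) := by
  rw [Chat_eq, Cmat_pi_div_four]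
  ext j
  fin_cases i <;> fin_cases j <;> simp [Mminus, Cmat, swapCoins, enc, dec₁, dec₂]

lemma Mplus_mulVec_apply (φ : ℝ) (v : Fin 4 → ℂ) (i : Fin 4) :
    (Mplus (Real.pi / 4 * (1 + φ)) *ᵥ v) i =
      if dec₁ i = 0 then (Chat φ *ᵥ v) (swapCoins i) else 0 := by
  rw [mulVec, Mplus_apply]
  split_ifs
  · rfl
  · exact zero_dotProduct v

lemma Mminus_mulVec_apply (φ : ℝ) (v : Fin 4 → ℂ) (i : Fin 4) :
    (Mminus (Real.pi / 4 * (1 + φ)) *ᵥ v) i =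
      if dec₁ i = 0 then 0 else (Chat φ *ᵥ v) (swapCoins i) := by
  rw [mulVec, Mminus_apply]
  split_ifs
  · exact zero_dotProduct v
  · rfl

/-- one step of the recycled-coin walk in amplitude form:
`ψ'(n) = M₊(θ)·ψ(n+1) + M₋(θ)·ψ(n-1)` with `θ = (π/4)(1+φ)`. -/
theorem statement9 (d : ℕ) (hd : 1 ≤ d) (φ θ : ℝ)
    (hθ : θ = Real.pi / 4 * (1 + φ)) (ψ : WState d) :
    Urc d φ ψ
      = fun n => (Mplus θ).mulVec (ψ (n + 1)) + (Mminus θ).mulVec (ψ (n - 1)) := by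
  subst hθ
  funext n i
  rw [Urc_apply, Pi.add_apply, Mplus_mulVec_apply, Mminus_mulVec_apply]
  split_ifs
  · rw [add_zero]
  · rw [zero_add]

end
end

section
/- Let d ≥ 1, φ ∈ ℝ, θ = (π/4)(1+φ), and let v ∈ ℂ⁴ be a unit vector with initial state ψ₀ = |0⟩⊗v. For each k ∈ ℤ/dℤ, let {φ_j(k)}_{j=1}^{4} be an orthonormal basis of eigenvectors of M_k(θ) with corresponding eigenvalues λ_j(k), and set α_j(k) = ⟨φ_j(k), v⟩. Then for all n ∈ ℤ/dℤ and t ≥ 0: p(n,t,φ;ψ₀) = (1/d²)·Σ_{k,m=0}^{d−1} Σ_{j,l=1}^{4} e^{2πin(m−k)/d}·\overline{α_j(k)}·α_l(m)·(\overline{λ_j(k)}·λ_l(m))^t·⟨φ_j(k), φ_l(m)⟩. -/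
open scoped Classical
open Complex Matrix Finset Filter

noncomputable section

/-!
The discrete Fourier transform in the position variable turns one step of the walk into
multiplication by `M_k(θ)`, independently for each frequency `k`. After `t` steps the `k`-th Fourier
coefficient of the state is therefore `M_k(θ) ^ t` applied to the initial one, which is explicit in
an orthonormal eigenbasis. Fourier inversion gives the amplitude at `n`, and expanding its squared
norm sesquilinearly gives the probability.
-/

lemma pow_mulVec_eq_pow_smul {ι R : Type*} [Fintype ι] [DecidableEq ι] [CommSemiring R]
    {A : Matrix ι ι R} {μ : R} {w : ι → R}
    (hw : A *ᵥ w = μ • w) (t : ℕ) : A ^ t *ᵥ w = μ ^ t • w := by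
  induction t with
  | zero => simp
  | succ t ih =>
    rw [pow_succ, ← Matrix.mulVec_mulVec, hw, Matrix.mulVec_smul, ih, smul_smul, pow_succ']

section DotProduct

variable {ι κ κ' R : Type*} [Fintype ι] [CommSemiring R] [StarRing R]

lemma sum_star_dotProduct_smul_eq_self [DecidableEq ι] {b : ι → ι → R}
    (hb : ∀ j l, star (b j) ⬝ᵥ b l = if j = l then 1 else 0) (v : ι → R) :
    ∑ j, (star (b j) ⬝ᵥ v) • b j = v := by
  let B : Matrix ι ι R := Matrix.of b
  have B_conj_mul_transpose : B.map star * Bᵀ = 1 := by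
    ext j l
    rw [Matrix.one_apply, ← hb j l]
    rfl
  calc ∑ j, (star (b j) ⬝ᵥ v) • b j
      = Bᵀ *ᵥ (B.map star *ᵥ v) := by rw [Matrix.mulVec_transpose, Matrix.vecMul_eq_sum]; rfl
    _ = v := by
      rw [Matrix.mulVec_mulVec, mul_eq_one_comm.mp B_conj_mul_transpose, Matrix.one_mulVec]

lemma pow_mulVec_eq_sum_eigenvectors [DecidableEq ι] {A : Matrix ι ι R} {b : ι → ι → R}
    {μ : ι → R} (hb : ∀ j l, star (b j) ⬝ᵥ b l = if j = l then 1 else 0)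
    (hA : ∀ j, A *ᵥ b j = μ j • b j) (v : ι → R) (t : ℕ) :
    A ^ t *ᵥ v = ∑ j, (star (b j) ⬝ᵥ v * μ j ^ t) • b j := by
  conv_lhs => rw [← sum_star_dotProduct_smul_eq_self hb v]
  simp only [Matrix.mulVec_sum, Matrix.mulVec_smul, pow_mulVec_eq_pow_smul (hA _), smul_smul]

lemma star_sum_smul_dotProduct_sum_smul [Fintype κ] [Fintype κ'] (a : κ → R) (b : κ → ι → R)
    (a' : κ' → R) (b' : κ' → ι → R) :
    star (∑ j, a j • b j) ⬝ᵥ ∑ l, a' l • b' l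
      = ∑ j, ∑ l, star (a j) * a' l * (star (b j) ⬝ᵥ b' l) := by
  rw [star_sum, sum_dotProduct]
  simp only [star_smul, smul_dotProduct, dotProduct_sum, dotProduct_smul, smul_eq_mul,
    mul_left_comm, mul_assoc]

end DotProduct

lemma ofReal_sum_norm_sq_eq_star_dotProduct {ι : Type*} [Fintype ι] (u : ι → ℂ) :
    ((∑ i, ‖u i‖ ^ 2 : ℝ) : ℂ) = star u ⬝ᵥ u := by
  simp [dotProduct, Complex.conj_mul']

lemma cdot_eq_star_dotProduct (u v : Fin 4 → ℂ) : cdot u v = star u ⬝ᵥ v := rfl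

section Fourier

open ZMod

variable {d : ℕ} [NeZero d]

lemma stdAddChar_eq_exp (k : ZMod d) : stdAddChar k = exp (2 * Real.pi * I * k.val / d) := by
  simpa using stdAddChar_coe (N := d) (k.val : ℤ)

lemma stdAddChar_mul_eq_exp (k n : ZMod d) :
    stdAddChar (k * n) = exp (2 * Real.pi * I * k.val * n.val / d) := by
  simpa [mul_assoc] using stdAddChar_coe (N := d) (k.val * n.val : ℤ)

lemma star_stdAddChar_mul_stdAddChar_eq_exp (k m n : ZMod d) :
    star (stdAddChar (k * n)) * stdAddChar (m * n)
      = exp (2 * Real.pi * I * n.val * ((m.val : ℂ) - (k.val : ℂ)) / d) := by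
  have star_eq_inv : star (stdAddChar (k * n)) = (stdAddChar (k * n))⁻¹ := by
    rw [← AddChar.map_neg_eq_inv, AddChar.map_neg_eq_conj, starRingEnd_apply]
  rw [star_eq_inv, stdAddChar_mul_eq_exp, stdAddChar_mul_eq_exp, ← exp_neg, ← exp_add]
  ring_nf

lemma dft_comp_add_right {E : Type*} [AddCommGroup E] [Module ℂ E] (f : ZMod d → E)
    (a k : ZMod d) : 𝓕 (fun n ↦ f (n + a)) k = stdAddChar (a * k) • 𝓕 f k := by
  simp only [dft_apply, smul_sum, smul_smul, ← AddChar.map_add_eq_mul]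
  refine Fintype.sum_equiv (Equiv.addRight a) _ _ fun n ↦ ?_
  simp only [Equiv.coe_addRight]
  ring_nf

lemma dft_apply_apply {ι : Type*} (f : ZMod d → ι → ℂ) (k : ZMod d) (i : ι) :
    𝓕 f k i = 𝓕 (fun n ↦ f n i) k := by
  simp only [dft_apply, Finset.sum_apply, Pi.smul_apply]

lemma dft_mulVec {ι κ : Type*} [Fintype κ] (A : Matrix ι κ ℂ) (f : ZMod d → κ → ℂ)
    (k : ZMod d) : 𝓕 (fun n ↦ A *ᵥ f n) k = A *ᵥ 𝓕 f k := by
  simp only [dft_apply, Matrix.mulVec_sum, Matrix.mulVec_smul]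

lemma FT_eq_dft (ψ : WState d) : FT d ψ = 𝓕 ψ := by
  funext k
  refine Finset.sum_congr rfl fun n _ ↦ ?_
  rw [AddChar.map_neg_eq_inv, stdAddChar_mul_eq_exp, exp_neg]
  ring_nf

lemma FT_initState (v : Fin 4 → ℂ) (k : ZMod d) : FT d (initState d v) k = v := by
  have initState_eq_ite (n : ZMod d) : initState d v n = if n = 0 then v else 0 := by
    funext i
    simp only [initState]
    split_ifs <;> rfl
  simp [FT, initState_eq_ite]

end Fourier

section Walk

open ZMod

variable {d : ℕ} [NeZero d]

lemma dft_shiftOp_apply (ψ : WState d) (k : ZMod d) (i : Fin 4) :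
    𝓕 (shiftOp d ψ) k i = stdAddChar (if dec₂ i = 0 then k else -k) * 𝓕 ψ k i := by
  simp only [dft_apply_apply, shiftOp, sub_eq_add_neg]
  split_ifs
  · rw [dft_comp_add_right (fun n ↦ ψ n i), one_mul, smul_eq_mul]
  · rw [dft_comp_add_right (fun n ↦ ψ n i), neg_one_mul, smul_eq_mul]

lemma Mk_apply_eq_stdAddChar_mul_Chat (φ : ℝ) (k : ZMod d) (i j : Fin 4) :
    Mk d k (Real.pi / 4 * (1 + φ)) i j
      = stdAddChar (if dec₁ i = 0 then k else -k) * Chat φ (enc (dec₂ i) (dec₁ i)) j := by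
  have sqrt_two_div_two : ((√2 : ℝ) : ℂ) / 2 = ((√2 : ℝ) : ℂ)⁻¹ := by
    exact_mod_cast congrArg Complex.ofReal (Real.sqrt_div_self (x := 2))
  fin_cases i <;> fin_cases j <;>
    simp [Mk, Chat, Cmat, enc, dec₁, dec₂, stdAddChar_eq_exp, AddChar.map_neg_eq_inv, exp_neg,
      sqrt_two_div_two, div_eq_mul_inv (exp _), div_eq_mul_inv (exp _)⁻¹]

lemma dft_Urc (φ : ℝ) (ψ : WState d) (k : ZMod d) :
    𝓕 (Urc d φ ψ) k = Mk d k (Real.pi / 4 * (1 + φ)) *ᵥ 𝓕 ψ k := by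
  have dec₂_enc (c₁ c₂ : Fin 2) : dec₂ (enc c₁ c₂) = c₂ := by
    ext; simp only [dec₂, enc]; omega
  funext i
  calc 𝓕 (Urc d φ ψ) k i
      = 𝓕 (shiftOp d (coinOp d φ ψ)) k (enc (dec₂ i) (dec₁ i)) := by
        simp only [dft_apply_apply, Urc, memOp]
    _ = stdAddChar (if dec₁ i = 0 then k else -k)
          * (Chat φ *ᵥ 𝓕 ψ k) (enc (dec₂ i) (dec₁ i)) := by
        rw [dft_shiftOp_apply, dec₂_enc, ← dft_mulVec]
        rfl
    _ = (Mk d k (Real.pi / 4 * (1 + φ)) *ᵥ 𝓕 ψ k) i := by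
        simp only [Matrix.mulVec, dotProduct, Mk_apply_eq_stdAddChar_mul_Chat, mul_sum, mul_assoc]

lemma dft_iterate_Urc (φ : ℝ) (ψ : WState d) (k : ZMod d) (t : ℕ) :
    𝓕 ((Urc d φ)^[t] ψ) k = Mk d k (Real.pi / 4 * (1 + φ)) ^ t *ᵥ 𝓕 ψ k := by
  induction t with
  | zero => simp
  | succ t ih =>
    rw [Function.iterate_succ_apply', dft_Urc, ih, Matrix.mulVec_mulVec, pow_succ']

lemma iterate_Urc_eq_sum_eigenvectors {φ : ℝ} {Φ : ZMod d → Fin 4 → Fin 4 → ℂ}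
    {lam : ZMod d → Fin 4 → ℂ}
    (horth : ∀ k j l, cdot (Φ k j) (Φ k l) = if j = l then 1 else 0)
    (heig : ∀ k j, Mk d k (Real.pi / 4 * (1 + φ)) *ᵥ Φ k j = lam k j • Φ k j)
    (ψ : WState d) (n : ZMod d) (t : ℕ) :
    (Urc d φ)^[t] ψ n = (d : ℂ)⁻¹ • ∑ k, stdAddChar (k * n) •
      ∑ j, (cdot (Φ k j) (FT d ψ k) * lam k j ^ t) • Φ k j := by
  rw [← dft.symm_apply_apply ((Urc d φ)^[t] ψ), invDFT_apply, FT_eq_dft]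
  simp only [dft_iterate_Urc]
  congr! with k
  exact pow_mulVec_eq_sum_eigenvectors (horth k) (heig k) _ t

end Walk

theorem statement12_general (d : ℕ) [NeZero d] (φ θ : ℝ) (hθ : θ = Real.pi / 4 * (1 + φ))
    (ψ₀ : WState d) (Φ : ZMod d → Fin 4 → Fin 4 → ℂ) (lam : ZMod d → Fin 4 → ℂ)
    (horth : ∀ k j l, cdot (Φ k j) (Φ k l) = if j = l then 1 else 0)
    (heig : ∀ k j, (Mk d k θ).mulVec (Φ k j) = lam k j • Φ k j)
    (n : ZMod d) (t : ℕ) :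
    (prob d φ ψ₀ n t : ℂ)
      = 1 / (d : ℂ) ^ 2 *
        ∑ k : ZMod d, ∑ m : ZMod d, ∑ j : Fin 4, ∑ l : Fin 4,
          Complex.exp (2 * Real.pi * Complex.I * n.val
              * ((m.val : ℂ) - (k.val : ℂ)) / d)
            * (starRingEnd ℂ) (cdot (Φ k j) (FT d ψ₀ k)) * cdot (Φ m l) (FT d ψ₀ m)
            * ((starRingEnd ℂ) (lam k j) * lam m l) ^ t
            * cdot (Φ k j) (Φ m l) := by
  subst hθ
  rw [prob, ofReal_sum_norm_sq_eq_star_dotProduct, iterate_Urc_eq_sum_eigenvectors horth heig,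
    star_smul, smul_dotProduct, dotProduct_smul, smul_smul, smul_eq_mul,
    star_sum_smul_dotProduct_sum_smul]
  have star_inv_mul_inv : star (d : ℂ)⁻¹ * (d : ℂ)⁻¹ = 1 / (d : ℂ) ^ 2 := by
    simp [sq]
  rw [star_inv_mul_inv]
  congr 1
  refine sum_congr rfl fun k _ ↦ sum_congr rfl fun m _ ↦ ?_
  rw [star_sum_smul_dotProduct_sum_smul, star_stdAddChar_mul_stdAddChar_eq_exp]
  simp only [mul_sum, star_mul', star_pow, mul_pow, starRingEnd_apply, cdot_eq_star_dotProduct]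
  refine sum_congr rfl fun j _ ↦ sum_congr rfl fun l _ ↦ ?_
  ring

/-- closed form (Equation 17 of the paper) of `p(n,t,φ;|0⟩⊗v)` in
terms of an orthonormal eigensystem `Φ k j`, `lam k j` of `M_k(θ)`. -/
theorem statement12 (d : ℕ) [NeZero d] (hd : 1 ≤ d) (φ θ : ℝ)
    (hθ : θ = Real.pi / 4 * (1 + φ))
    (v : Fin 4 → ℂ) (hv : ∑ i : Fin 4, ‖v i‖ ^ 2 = 1)
    (Φ : ZMod d → Fin 4 → Fin 4 → ℂ) (lam : ZMod d → Fin 4 → ℂ)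
    (horth : ∀ k j l, cdot (Φ k j) (Φ k l) = if j = l then 1 else 0)
    (heig : ∀ k j, (Mk d k θ).mulVec (Φ k j) = lam k j • Φ k j)
    (n : ZMod d) (t : ℕ) :
    (prob d φ (initState d v) n t : ℂ)
      = 1 / (d : ℂ) ^ 2 *
        ∑ k : ZMod d, ∑ m : ZMod d, ∑ j : Fin 4, ∑ l : Fin 4,
          Complex.exp (2 * Real.pi * Complex.I * n.val
              * ((m.val : ℂ) - (k.val : ℂ)) / d)
            * (starRingEnd ℂ) (cdot (Φ k j) v) * cdot (Φ m l) v
            * ((starRingEnd ℂ) (lam k j) * lam m l) ^ t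
            * cdot (Φ k j) (Φ m l) := by
  simpa only [FT_initState] using
    statement12_general d φ θ hθ (initState d v) Φ lam horth heig n t

end
end
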